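/- Let f ∈ L₁(S¹) be a 2π-periodic integrable function on the circle, let a₀ := (1/π)∫_{−π}^{π} f(φ) dφ, and let 0 < δ < π. Then there is an absolute constant c such that for every integer L ≥ 1 and every θ ∈ (−π,π], |V_L^δ(f;θ)| ≤ (c/δ)(|a₀|/L + ω(f,1/L)_{L₁(S¹)}), where ω(f,η)_{L₁(S¹)} := sup_{|φ|≤η} ∫_{−π}^{π} |f(z+φ) − f(z)| dz is the L₁ modulus of continuity of f. -/

import Mathlib

open MeasureTheory Real
open scoped ENNReal NNReal

/-- The Dirichlet kernel of order `L` on the circle: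
`v_L(φ) = sin((L+1/2)φ)/sin(φ/2)`. -/
noncomputable def dirKerCirc (L : ℕ) (φ : ℝ) : ℝ :=
  Real.sin (((L : ℝ) + 1 / 2) * φ) / Real.sin (φ / 2)

/-- The neighbourhood `U(θ;δ) = {φ ∈ (−π,π] : cos(φ−θ) > cos δ}`. -/
def Unbhd (θ δ : ℝ) : Set ℝ :=
  {φ : ℝ | φ ∈ Set.Ioc (-Real.pi) Real.pi ∧ Real.cos (φ - θ) > Real.cos δ}

/-- The `L`-th Fourier local convolution of `f` on the circle:
`V_L^δ(f;θ) = (1/(2π)) ∫_{[−π,π]∖U(θ;δ)} v_L(θ−φ) f(φ) dφ`. -/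
noncomputable def localConvCirc (δ : ℝ) (L : ℕ) (f : ℝ → ℝ) (θ : ℝ) : ℝ :=
  (1 / (2 * Real.pi)) *
    ∫ φ in Set.Icc (-Real.pi) Real.pi \ Unbhd θ δ, dirKerCirc L (θ - φ) * f φ

/-- The `L₁` modulus of continuity on the circle:
`ω(f,η) = sup_{|φ| ≤ η} ∫_{−π}^{π} |f(z+φ) − f(z)| dz`. -/
noncomputable def modContCirc (f : ℝ → ℝ) (η : ℝ) : ℝ :=
  ⨆ φ : {φ : ℝ // |φ| ≤ η}, ∫ z in (-Real.pi)..Real.pi, |f (z + φ.1) - f z|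

/-!
Let `S t = h⁻¹ ∫₀ʰ f (t + u) du` be the Steklov mean of `f` with step `h = 1 / L`, and
`ω = ω(f,h)`. Off the excised arc the kernel is at most `π / δ`, and `f - S` has `L₁` norm at most
`ω`, so replacing `f` by `S` costs `O(ω / δ)`. Since `S' t = h⁻¹ (f (t + h) - f t)`, the function
`S` has variation at most `h⁻¹ ω` over a period and stays that close to the mean of `f`. On the
other hand `1 / sin (t / 2)` has variation `O(1 / δ)` on `[δ, 2π - δ]`, so one integration by parts
shows that the primitive of the kernel is `O(1 / (L δ))`; a second one, moving the derivative onto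
`S`, bounds the remaining integral by `O((|a₀| + L ω) / (L δ))`.
-/

section Steklov

variable {E : Type*} [NormedAddCommGroup E] {F : ℝ → E}

lemma intervalIntegrable_comp_add (hF : ∀ a b, IntervalIntegrable F volume a b) (u a b : ℝ) :
    IntervalIntegrable (fun t => F (t + u)) volume a b := by
  simpa only [add_sub_cancel_right] using (hF (a + u) (b + u)).comp_add_right u

lemma intervalIntegrable_comp_add_sub (hF : ∀ a b, IntervalIntegrable F volume a b)
    (u a b : ℝ) : IntervalIntegrable (fun t => F (t + u) - F t) volume a b :=
  (intervalIntegrable_comp_add hF u a b).sub (hF a b)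

lemma integrableOn_prod_comp_add (hF : ∀ a b, IntervalIntegrable F volume a b) (a b c d : ℝ) :
    IntegrableOn (Function.uncurry fun t u => F (t + u)) (Set.uIoc a b ×ˢ Set.uIoc c d) := by
  have hsnd : IntegrableOn (F ∘ Prod.snd)
      (Set.uIoc a b ×ˢ Set.Ioc (min a b + min c d) (max a b + max c d))
      ((volume : Measure ℝ).prod (volume : Measure ℝ)) := by
    rw [IntegrableOn, ← Measure.prod_restrict, Set.uIoc]
    exact (hF _ _).1.comp_snd _
  have hshear := ((measurePreserving_prod_add volume volume).integrableOn_comp_preimage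
    (MeasurableEquiv.shearAddRight ℝ).measurableEmbedding).2 hsnd
  refine hshear.mono_set ?_
  rintro ⟨t, u⟩ ⟨ht, hu⟩
  exact ⟨ht, add_lt_add ht.1 hu.1, add_le_add ht.2 hu.2⟩

lemma integrableOn_prod_comp_add_sub (hF : ∀ a b, IntervalIntegrable F volume a b)
    (a b c d : ℝ) :
    IntegrableOn (Function.uncurry fun t u => F (t + u) - F t) (Set.uIoc a b ×ˢ Set.uIoc c d) := by
  have hfst : IntegrableOn (fun p : ℝ × ℝ => F p.1) (Set.uIoc a b ×ˢ Set.uIoc c d)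
      ((volume : Measure ℝ).prod (volume : Measure ℝ)) := by
    rw [IntegrableOn, ← Measure.prod_restrict, Set.uIoc, Set.uIoc]
    exact (hF _ _).1.comp_fst _
  exact (integrableOn_prod_comp_add hF a b c d).sub hfst

lemma integral_norm_comp_add_sub_le_period (hF : ∀ a b, IntervalIntegrable F volume a b)
    {T a b : ℝ} (hper : Function.Periodic F T) (hab : a ≤ b) (hbT : b ≤ a + T) (c u : ℝ) :
    ∫ t in a..b, ‖F (t + u) - F t‖ ≤ ∫ t in c..(c + T), ‖F (t + u) - F t‖ := by
  have hper' : Function.Periodic (fun t => ‖F (t + u) - F t‖) T := fun t => by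
    simp only [add_right_comm t T u, hper t, hper (t + u)]
  rw [hper'.intervalIntegral_add_eq c a]
  exact intervalIntegral.integral_mono_interval le_rfl hab hbT
    (Filter.Eventually.of_forall fun _ => norm_nonneg _)
    (intervalIntegrable_comp_add_sub hF u a _).norm

lemma integral_norm_comp_add_sub_le_two_mul (hF : ∀ a b, IntervalIntegrable F volume a b)
    {T : ℝ} (hper : Function.Periodic F T) (hT : 0 ≤ T) (c u : ℝ) :
    ∫ t in c..(c + T), ‖F (t + u) - F t‖ ≤ 2 * ∫ t in c..(c + T), ‖F t‖ := by
  have hnorm : Function.Periodic (fun t => ‖F t‖) T := hper.comp norm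
  have hshift : ∫ t in c..(c + T), ‖F (t + u)‖ = ∫ t in c..(c + T), ‖F t‖ := by
    rw [intervalIntegral.integral_comp_add_right (fun t => ‖F t‖), add_right_comm,
      hnorm.intervalIntegral_add_eq (c + u) c]
  have hFu := (intervalIntegrable_comp_add hF u c (c + T)).norm
  calc ∫ t in c..(c + T), ‖F (t + u) - F t‖
      ≤ ∫ t in c..(c + T), (‖F (t + u)‖ + ‖F t‖) :=
        intervalIntegral.integral_mono_on (le_add_of_nonneg_right hT)
          (intervalIntegrable_comp_add_sub hF u _ _).norm (hFu.add (hF _ _).norm)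
          fun t _ => norm_sub_le _ _
    _ = 2 * ∫ t in c..(c + T), ‖F t‖ := by
        rw [intervalIntegral.integral_add hFu (hF _ _).norm, hshift, two_mul]

variable [NormedSpace ℝ E]

lemma intervalIntegrable_smul_of_abs_le {w : ℝ → ℝ} {g : ℝ → E} {a b B : ℝ} (hab : a ≤ b)
    (hw : IntervalIntegrable w volume a b) (hB : ∀ t ∈ Set.Icc a b, |w t| ≤ B)
    (hg : IntervalIntegrable g volume a b) :
    IntervalIntegrable (fun t => w t • g t) volume a b := by
  rw [intervalIntegrable_iff_integrableOn_Ioc_of_le hab] at hw hg ⊢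
  exact hg.bdd_smul B hw.aestronglyMeasurable
    (ae_restrict_of_forall_mem measurableSet_Ioc fun t ht => hB t (Set.Ioc_subset_Icc_self ht))

lemma norm_integral_smul_le_of_abs_le {w : ℝ → ℝ} {g : ℝ → E} {a b B : ℝ} (hab : a ≤ b)
    (hB : ∀ t ∈ Set.Icc a b, |w t| ≤ B) (hg : IntervalIntegrable g volume a b) :
    ‖∫ t in a..b, w t • g t‖ ≤ B * ∫ t in a..b, ‖g t‖ := by
  have hpointwise : ∀ t ∈ Set.Ioc a b, ‖w t • g t‖ ≤ B * ‖g t‖ := by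
    intro t ht
    rw [norm_smul]
    gcongr
    exact hB t (Set.Ioc_subset_Icc_self ht)
  rw [← intervalIntegral.integral_const_mul]
  exact intervalIntegral.norm_integral_le_of_norm_le hab (Filter.Eventually.of_forall hpointwise)
    (hg.norm.const_mul B)

lemma integral_smul_integral_right_eq [CompleteSpace E] {w : ℝ → ℝ} {g : ℝ → E} {a b : ℝ}
    (hab : a ≤ b) (hw : IntervalIntegrable w volume a b) (hg : IntervalIntegrable g volume a b) :
    ∫ t in a..b, w t • ∫ v in t..b, g v = ∫ v in a..b, (∫ t in a..v, w t) • g v := by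
  set H : ℝ → ℝ → E := fun t v => {s | s ≤ v}.indicator w t • g v
  have hint : IntegrableOn (Function.uncurry H) (Set.uIoc a b ×ˢ Set.uIoc a b) := by
    have hwg := (intervalIntegrable_iff.1 hw).smul_prod (intervalIntegrable_iff.1 hg)
    rw [Measure.prod_restrict] at hwg
    refine (Integrable.indicator hwg (measurableSet_le measurable_fst measurable_snd)).congr
      (Filter.Eventually.of_forall fun p => ?_)
    by_cases hp : p.1 ≤ p.2 <;> simp [H, Function.uncurry, hp]
  have hright : ∀ t ∈ Set.Ioc a b, ∫ v in a..b, H t v = w t • ∫ v in t..b, g v := by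
    intro t ht
    have hH : H t = fun v => w t • (Set.Ici t).indicator g v := by
      funext v
      by_cases hv : t ≤ v <;> simp [H, hv]
    have hinter : Set.Ioc a b ∩ Set.Ici t = Set.Icc t b := by
      ext v
      exact ⟨fun hv => ⟨hv.2, hv.1.2⟩, fun hv => ⟨⟨ht.1.trans_le hv.1, hv.2⟩, hv.1⟩⟩
    rw [hH, intervalIntegral.integral_smul, intervalIntegral.integral_of_le hab,
      setIntegral_indicator measurableSet_Ici, hinter, integral_Icc_eq_integral_Ioc,
      intervalIntegral.integral_of_le ht.2]
  have hleft : ∀ v ∈ Set.uIcc a b, ∫ t in a..b, H t v = (∫ t in a..v, w t) • g v := by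
    intro v hv
    rw [Set.uIcc_of_le hab] at hv
    rw [intervalIntegral.integral_smul_const, intervalIntegral.integral_indicator hv]
  calc ∫ t in a..b, w t • ∫ v in t..b, g v
      = ∫ t in a..b, ∫ v in a..b, H t v := by
        simp only [intervalIntegral.integral_of_le hab] at hright ⊢
        exact (setIntegral_congr_fun measurableSet_Ioc hright).symm
    _ = ∫ v in a..b, ∫ t in a..b, H t v := intervalIntegral_intervalIntegral_swap hint
    _ = ∫ v in a..b, (∫ t in a..v, w t) • g v := intervalIntegral.integral_congr hleft

/-- The Steklov (moving) average `t ↦ h⁻¹ ∫₀ʰ F(t + u) du`, which regularizes `F`. -/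
noncomputable def steklovMean (F : ℝ → E) (h t : ℝ) : E :=
  h⁻¹ • ∫ u in 0..h, F (t + u)

lemma steklovMean_eq_integral (F : ℝ → E) (h t : ℝ) :
    steklovMean F h t = h⁻¹ • ∫ v in t..(t + h), F v := by
  rw [steklovMean, intervalIntegral.integral_comp_add_left, add_zero]

lemma steklovMean_sub_steklovMean (hF : ∀ a b, IntervalIntegrable F volume a b) (h x y : ℝ) :
    steklovMean F h y - steklovMean F h x = h⁻¹ • ∫ t in x..y, (F (t + h) - F t) := by
  rw [steklovMean_eq_integral, steklovMean_eq_integral, ← smul_sub,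
    intervalIntegral.integral_sub (intervalIntegrable_comp_add hF h x y) (hF x y),
    intervalIntegral.integral_comp_add_right,
    intervalIntegral.integral_interval_sub_interval_comm' (hF _ _) (hF _ _) (hF _ _)]

lemma continuous_steklovMean (hF : ∀ a b, IntervalIntegrable F volume a b) (h : ℝ) :
    Continuous (steklovMean F h) := by
  have hsub : steklovMean F h =
      fun t => steklovMean F h 0 + h⁻¹ • ∫ v in 0..t, (F (v + h) - F v) := by
    funext t
    rw [← steklovMean_sub_steklovMean hF, add_sub_cancel]
  rw [hsub]
  exact continuous_const.add ((intervalIntegral.continuous_primitive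
    (intervalIntegrable_comp_add_sub hF h) 0).const_smul _)

lemma norm_steklovMean_sub_le (hF : ∀ a b, IntervalIntegrable F volume a b) {h a b x y : ℝ}
    (hh : 0 ≤ h) (hx : x ∈ Set.Icc a b) (hy : y ∈ Set.Icc a b) :
    ‖steklovMean F h y - steklovMean F h x‖ ≤ h⁻¹ * ∫ t in a..b, ‖F (t + h) - F t‖ := by
  rw [steklovMean_sub_steklovMean hF, norm_smul, Real.norm_of_nonneg (inv_nonneg.2 hh)]
  gcongr
  have hsub : Set.uIoc x y ⊆ Set.uIoc a b :=
    Set.uIoc_subset_uIoc_of_uIcc_subset_uIcc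
      (Set.uIcc_subset_uIcc (Set.Icc_subset_uIcc hx) (Set.Icc_subset_uIcc hy))
  have hnonneg : 0 ≤ ∫ t in a..b, ‖F (t + h) - F t‖ :=
    intervalIntegral.integral_nonneg (hx.1.trans hx.2) fun _ _ => norm_nonneg _
  calc ‖∫ t in x..y, (F (t + h) - F t)‖
      ≤ |∫ t in x..y, ‖F (t + h) - F t‖| := intervalIntegral.norm_integral_le_abs_integral_norm
    _ ≤ |∫ t in a..b, ‖F (t + h) - F t‖| :=
        intervalIntegral.abs_integral_mono_interval hsub
          (Filter.Eventually.of_forall fun _ => norm_nonneg _)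
          (intervalIntegrable_comp_add_sub hF h a b).norm
    _ = ∫ t in a..b, ‖F (t + h) - F t‖ := abs_of_nonneg hnonneg

lemma steklovMean_sub_self [CompleteSpace E] (hF : ∀ a b, IntervalIntegrable F volume a b)
    {h : ℝ} (hh : h ≠ 0) (t : ℝ) :
    steklovMean F h t - F t = h⁻¹ • ∫ u in 0..h, (F (t + u) - F t) := by
  have hshift : IntervalIntegrable (fun u => F (t + u)) volume 0 h := by
    simpa only [add_comm t] using intervalIntegrable_comp_add hF t 0 h
  rw [intervalIntegral.integral_sub hshift intervalIntegrable_const,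
    intervalIntegral.integral_const, sub_zero, smul_sub, inv_smul_smul₀ hh, steklovMean]

lemma integral_norm_steklovMean_sub_self_le [CompleteSpace E]
    (hF : ∀ a b, IntervalIntegrable F volume a b) {h a b M : ℝ} (hh : 0 < h) (hab : a ≤ b)
    (hM : ∀ u ∈ Set.Icc 0 h, ∫ t in a..b, ‖F (t + u) - F t‖ ≤ M) :
    ∫ t in a..b, ‖steklovMean F h t - F t‖ ≤ M := by
  have hprod : IntegrableOn (Function.uncurry fun t u => ‖F (t + u) - F t‖)
      (Set.uIoc a b ×ˢ Set.uIoc 0 h) := (integrableOn_prod_comp_add_sub hF a b 0 h).norm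
  have hinner : IntervalIntegrable (fun t => ∫ u in 0..h, ‖F (t + u) - F t‖) volume a b := by
    rw [IntegrableOn, Measure.volume_eq_prod, ← Measure.prod_restrict] at hprod
    simp only [intervalIntegral.integral_of_le hh.le, ← Set.uIoc_of_le hh.le]
    exact intervalIntegrable_iff.2 hprod.integral_prod_left
  have hpointwise (t : ℝ) :
      ‖steklovMean F h t - F t‖ ≤ h⁻¹ * ∫ u in 0..h, ‖F (t + u) - F t‖ := by
    rw [steklovMean_sub_self hF hh.ne', norm_smul, Real.norm_of_nonneg (inv_nonneg.2 hh.le)]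
    gcongr
    exact intervalIntegral.norm_integral_le_integral_norm hh.le
  calc ∫ t in a..b, ‖steklovMean F h t - F t‖
      ≤ ∫ t in a..b, h⁻¹ * ∫ u in 0..h, ‖F (t + u) - F t‖ :=
        intervalIntegral.integral_mono_on hab
          (((continuous_steklovMean hF h).intervalIntegrable a b).sub (hF a b)).norm
          (hinner.const_mul _) fun t _ => hpointwise t
    _ = h⁻¹ * ∫ u in 0..h, ∫ t in a..b, ‖F (t + u) - F t‖ := by
        rw [intervalIntegral.integral_const_mul, intervalIntegral_intervalIntegral_swap hprod]
    _ ≤ h⁻¹ * (M * |h - 0|) := by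
        gcongr
        refine (Real.le_norm_self _).trans
          (intervalIntegral.norm_integral_le_of_norm_le_const fun u hu => ?_)
        rw [Set.uIoc_of_le hh.le] at hu
        rw [Real.norm_of_nonneg (intervalIntegral.integral_nonneg hab fun _ _ => norm_nonneg _)]
        exact hM u (Set.Ioc_subset_Icc_self hu)
    _ = M := by
        rw [sub_zero, abs_of_pos hh]
        field_simp

lemma integral_steklovMean_of_periodic [CompleteSpace E]
    (hF : ∀ a b, IntervalIntegrable F volume a b) {h T : ℝ} (hh : h ≠ 0)
    (hper : Function.Periodic F T) (x : ℝ) :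
    ∫ t in x..(x + T), steklovMean F h t = ∫ t in x..(x + T), F t := by
  have hshift (u : ℝ) : ∫ t in x..(x + T), F (t + u) = ∫ t in x..(x + T), F t := by
    rw [intervalIntegral.integral_comp_add_right, add_right_comm, hper.intervalIntegral_add_eq]
  calc ∫ t in x..(x + T), steklovMean F h t
      = h⁻¹ • ∫ u in 0..h, ∫ t in x..(x + T), F (t + u) := by
        simp only [steklovMean, intervalIntegral.integral_smul]
        rw [intervalIntegral_intervalIntegral_swap (integrableOn_prod_comp_add hF x (x + T) 0 h)]
    _ = ∫ t in x..(x + T), F t := by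
        simp only [hshift, intervalIntegral.integral_const, sub_zero, inv_smul_smul₀ hh]

lemma norm_steklovMean_le [CompleteSpace E] (hF : ∀ a b, IntervalIntegrable F volume a b)
    {h T x y : ℝ} (hh : 0 < h) (hT : 0 < T) (hper : Function.Periodic F T)
    (hy : y ∈ Set.Icc x (x + T)) :
    ‖steklovMean F h y‖ ≤
      T⁻¹ * ‖∫ t in x..(x + T), F t‖ + h⁻¹ * ∫ t in x..(x + T), ‖F (t + h) - F t‖ := by
  set osc := h⁻¹ * ∫ t in x..(x + T), ‖F (t + h) - F t‖
  have hsplit : T • steklovMean F h y =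
      (∫ t in x..(x + T), F t) + ∫ t in x..(x + T), (steklovMean F h y - steklovMean F h t) := by
    rw [intervalIntegral.integral_sub intervalIntegrable_const
      ((continuous_steklovMean hF h).intervalIntegrable _ _),
      integral_steklovMean_of_periodic hF hh.ne' hper, intervalIntegral.integral_const,
      add_sub_cancel_left, add_sub_cancel]
  have hosc : ‖∫ t in x..(x + T), (steklovMean F h y - steklovMean F h t)‖ ≤ osc * T := by
    have hle : x ≤ x + T := hy.1.trans hy.2
    have := intervalIntegral.norm_integral_le_of_norm_le_const (a := x) (b := x + T) (C := osc)
      fun t ht => norm_steklovMean_sub_le hF hh.le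
        (Set.Ioc_subset_Icc_self (Set.uIoc_of_le hle ▸ ht)) hy
    rwa [add_sub_cancel_left, abs_of_pos hT] at this
  have hnorm : T * ‖steklovMean F h y‖ ≤ ‖∫ t in x..(x + T), F t‖ + osc * T := by
    rw [← Real.norm_of_nonneg hT.le, ← norm_smul, hsplit, Real.norm_of_nonneg hT.le]
    exact (norm_add_le _ _).trans (by gcongr)
  calc ‖steklovMean F h y‖ = T⁻¹ * (T * ‖steklovMean F h y‖) := by field_simp
    _ ≤ T⁻¹ * (‖∫ t in x..(x + T), F t‖ + osc * T) := by gcongr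
    _ = T⁻¹ * ‖∫ t in x..(x + T), F t‖ + osc := by field_simp

lemma integral_smul_steklovMean_eq [CompleteSpace E]
    (hF : ∀ a b, IntervalIntegrable F volume a b) {w : ℝ → ℝ} {a b : ℝ} (h : ℝ) (hab : a ≤ b)
    (hw : IntervalIntegrable w volume a b) :
    ∫ t in a..b, w t • steklovMean F h t = (∫ t in a..b, w t) • steklovMean F h b -
      h⁻¹ • ∫ v in a..b, (∫ t in a..v, w t) • (F (v + h) - F v) := by
  have hprimitive : ∫ t in a..b, w t • (steklovMean F h b - steklovMean F h t) =
      h⁻¹ • ∫ v in a..b, (∫ t in a..v, w t) • (F (v + h) - F v) := by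
    simp only [steklovMean_sub_steklovMean hF, smul_comm _ h⁻¹, intervalIntegral.integral_smul]
    rw [integral_smul_integral_right_eq hab hw (intervalIntegrable_comp_add_sub hF h a b)]
  have hconst : IntervalIntegrable (fun t => w t • steklovMean F h b) volume a b :=
    hw.smul_continuousOn continuousOn_const
  have hmean : IntervalIntegrable (fun t => w t • steklovMean F h t) volume a b :=
    hw.smul_continuousOn (continuous_steklovMean hF h).continuousOn
  rw [← hprimitive]
  simp only [smul_sub]
  rw [intervalIntegral.integral_sub hconst hmean, intervalIntegral.integral_smul_const,
    sub_sub_cancel]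

lemma norm_integral_smul_steklovMean_le [CompleteSpace E]
    (hF : ∀ a b, IntervalIntegrable F volume a b) {w : ℝ → ℝ} {h a b D : ℝ} (hh : 0 ≤ h)
    (hab : a ≤ b) (hw : IntervalIntegrable w volume a b)
    (hD : ∀ t ∈ Set.Icc a b, |∫ v in a..t, w v| ≤ D) :
    ‖∫ t in a..b, w t • steklovMean F h t‖ ≤
      D * (‖steklovMean F h b‖ + h⁻¹ * ∫ t in a..b, ‖F (t + h) - F t‖) := by
  calc ‖∫ t in a..b, w t • steklovMean F h t‖
      ≤ |∫ t in a..b, w t| * ‖steklovMean F h b‖ +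
          h⁻¹ * ‖∫ v in a..b, (∫ t in a..v, w t) • (F (v + h) - F v)‖ := by
        rw [integral_smul_steklovMean_eq hF h hab hw]
        refine (norm_sub_le _ _).trans_eq ?_
        rw [norm_smul, norm_smul, Real.norm_of_nonneg (inv_nonneg.2 hh), Real.norm_eq_abs]
    _ ≤ D * ‖steklovMean F h b‖ + h⁻¹ * (D * ∫ t in a..b, ‖F (t + h) - F t‖) := by
        gcongr
        · exact hD b (Set.right_mem_Icc.2 hab)
        · exact norm_integral_smul_le_of_abs_le hab hD (intervalIntegrable_comp_add_sub hF h a b)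
    _ = D * (‖steklovMean F h b‖ + h⁻¹ * ∫ t in a..b, ‖F (t + h) - F t‖) := by ring

lemma norm_integral_smul_le_of_steklovMean [CompleteSpace E]
    (hF : ∀ a b, IntervalIntegrable F volume a b) {w : ℝ → ℝ} {h a b B D : ℝ}
    (hh : 0 ≤ h) (hab : a ≤ b) (hw : IntervalIntegrable w volume a b)
    (hB : ∀ t ∈ Set.Icc a b, |w t| ≤ B) (hD : ∀ t ∈ Set.Icc a b, |∫ v in a..t, w v| ≤ D) :
    ‖∫ t in a..b, w t • F t‖ ≤ B * (∫ t in a..b, ‖steklovMean F h t - F t‖) +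
      D * (‖steklovMean F h b‖ + h⁻¹ * ∫ t in a..b, ‖F (t + h) - F t‖) := by
  have hS := (continuous_steklovMean hF h).intervalIntegrable (μ := volume) a b
  have hsplit : ∫ t in a..b, w t • F t = (∫ t in a..b, w t • steklovMean F h t) -
      ∫ t in a..b, w t • (steklovMean F h t - F t) := by
    rw [← intervalIntegral.integral_sub (intervalIntegrable_smul_of_abs_le hab hw hB hS)
      (intervalIntegrable_smul_of_abs_le hab hw hB (hS.sub (hF a b)))]
    simp only [smul_sub, sub_sub_cancel]
  calc ‖∫ t in a..b, w t • F t‖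
      ≤ ‖∫ t in a..b, w t • (steklovMean F h t - F t)‖ +
          ‖∫ t in a..b, w t • steklovMean F h t‖ := by
        rw [hsplit, add_comm]
        exact norm_sub_le _ _
    _ ≤ _ := add_le_add (norm_integral_smul_le_of_abs_le hab hB (hS.sub (hF a b)))
        (norm_integral_smul_steklovMean_le hF hh hab hw hD)

theorem norm_integral_smul_le_of_periodic [CompleteSpace E]
    (hF : ∀ a b, IntervalIntegrable F volume a b) {w : ℝ → ℝ} {T h a b c B D M : ℝ}
    (hper : Function.Periodic F T) (hT : 0 < T) (hh : 0 < h) (hab : a ≤ b) (hbT : b ≤ a + T)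
    (hw : IntervalIntegrable w volume a b) (hB : ∀ t ∈ Set.Icc a b, |w t| ≤ B)
    (hD : ∀ t ∈ Set.Icc a b, |∫ v in a..t, w v| ≤ D)
    (hM : ∀ u ∈ Set.Icc 0 h, ∫ t in c..(c + T), ‖F (t + u) - F t‖ ≤ M) :
    ‖∫ t in a..b, w t • F t‖ ≤ B * M + D * (T⁻¹ * ‖∫ t in c..(c + T), F t‖ + 2 * (h⁻¹ * M)) := by
  have hB0 : 0 ≤ B := (abs_nonneg _).trans (hB a (Set.left_mem_Icc.2 hab))
  have hD0 : 0 ≤ D := (abs_nonneg _).trans (hD a (Set.left_mem_Icc.2 hab))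
  have hMab {u x y : ℝ} (hu : u ∈ Set.Icc 0 h) (hxy : x ≤ y) (hy : y ≤ x + T) :
      ∫ t in x..y, ‖F (t + u) - F t‖ ≤ M :=
    (integral_norm_comp_add_sub_le_period hF hper hxy hy c u).trans (hM u hu)
  have hmem : h ∈ Set.Icc 0 h := Set.right_mem_Icc.2 hh.le
  have hmean : ‖steklovMean F h b‖ ≤ T⁻¹ * ‖∫ t in c..(c + T), F t‖ + h⁻¹ * M := by
    have hbT' : b ≤ b + T := by linarith
    refine (norm_steklovMean_le hF hh hT hper (Set.left_mem_Icc.2 hbT')).trans ?_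
    rw [hper.intervalIntegral_add_eq b c]
    gcongr
    exact hMab hmem hbT' le_rfl
  calc ‖∫ t in a..b, w t • F t‖
      ≤ B * (∫ t in a..b, ‖steklovMean F h t - F t‖) +
          D * (‖steklovMean F h b‖ + h⁻¹ * ∫ t in a..b, ‖F (t + h) - F t‖) :=
        norm_integral_smul_le_of_steklovMean hF hh.le hab hw hB hD
    _ ≤ B * M + D * (T⁻¹ * ‖∫ t in c..(c + T), F t‖ + h⁻¹ * M + h⁻¹ * M) := by
        gcongr
        · exact integral_norm_steklovMean_sub_self_le hF hh hab fun u hu => hMab hu hab hbT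
        · exact hMab hmem hab hbT
    _ = B * M + D * (T⁻¹ * ‖∫ t in c..(c + T), F t‖ + 2 * (h⁻¹ * M)) := by ring

end Steklov

section Kernel

lemma abs_integral_sin_mul_le {N a b : ℝ} {φ φ' : ℝ → ℝ} (hN : 0 < N) (hab : a ≤ b)
    (hφ : ∀ v ∈ Set.uIcc a b, HasDerivAt φ (φ' v) v) (hφ' : IntervalIntegrable φ' volume a b) :
    |∫ v in a..b, sin (N * v) * φ v| ≤ (|φ a| + |φ b| + ∫ v in a..b, |φ' v|) / N := by
  have hcos (v : ℝ) : HasDerivAt (fun v => -cos (N * v)) (N * sin (N * v)) v := by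
    refine ((hasDerivAt_id v).const_mul N).cos.neg.congr_deriv ?_
    simp only [id_eq]
    ring
  have hparts : N * ∫ v in a..b, sin (N * v) * φ v =
      φ a * cos (N * a) - φ b * cos (N * b) + ∫ v in a..b, φ' v * cos (N * v) := by
    have := intervalIntegral.integral_mul_deriv_eq_deriv_mul hφ (fun v _ => hcos v) hφ'
      (Continuous.intervalIntegrable (by fun_prop) a b)
    have hcomm (v : ℝ) : φ v * (N * sin (N * v)) = N * (sin (N * v) * φ v) := by ring
    simp only [hcomm, mul_neg, intervalIntegral.integral_neg,
      intervalIntegral.integral_const_mul] at this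
    rw [this]
    ring
  have hbdry (v : ℝ) : |φ v * cos (N * v)| ≤ |φ v| := by
    rw [abs_mul]
    exact mul_le_of_le_one_right (abs_nonneg _) (abs_cos_le_one _)
  have hint : |∫ v in a..b, φ' v * cos (N * v)| ≤ ∫ v in a..b, |φ' v| := by
    simpa only [smul_eq_mul, norm_eq_abs, one_mul, mul_comm (cos _)] using
      norm_integral_smul_le_of_abs_le hab (fun v _ => abs_cos_le_one (N * v)) hφ'
  rw [le_div_iff₀' hN, ← abs_of_pos hN, ← abs_mul, abs_of_pos hN, hparts]
  exact (abs_add_le _ _).trans (add_le_add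
    ((abs_sub _ _).trans (add_le_add (hbdry a) (hbdry b))) hint)

variable {δ t : ℝ}

lemma div_pi_le_sin_half (hδ : 0 ≤ δ) (ht : t ∈ Set.Icc δ (2 * π - δ)) : δ / π ≤ sin (t / 2) := by
  have hδπ : δ ≤ π := by linarith [ht.1.trans ht.2]
  have hsymm : sin (δ / 2) ≤ sin (t / 2) := by
    rw [← cos_pi_div_two_sub, ← cos_pi_div_two_sub (t / 2), ← cos_abs (π / 2 - t / 2)]
    refine cos_le_cos_of_nonneg_of_le_pi (abs_nonneg _) (by linarith) ?_
    exact abs_le.2 ⟨by linarith [ht.2], by linarith [ht.1]⟩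
  calc δ / π = 2 / π * (δ / 2) := by ring
    _ ≤ sin (δ / 2) := mul_le_sin (by linarith) (by linarith)
    _ ≤ sin (t / 2) := hsymm

lemma sin_half_pos (ht : t ∈ Set.Ioo 0 (2 * π)) : 0 < sin (t / 2) :=
  sin_pos_of_pos_of_lt_pi (by linarith [ht.1]) (by linarith [ht.2])

lemma Icc_subset_Ioo_zero_two_pi (hδ : 0 < δ) : Set.Icc δ (2 * π - δ) ⊆ Set.Ioo 0 (2 * π) :=
  Set.Icc_subset_Ioo hδ (by linarith)

lemma abs_div_sin_half_le (hδ : 0 < δ) (ht : t ∈ Set.Icc δ (2 * π - δ)) {x : ℝ} (hx : |x| ≤ 1) :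
    |x / sin (t / 2)| ≤ π / δ := by
  rw [abs_div, abs_of_pos (sin_half_pos (Icc_subset_Ioo_zero_two_pi hδ ht))]
  calc |x| / sin (t / 2) ≤ 1 / (δ / π) :=
        div_le_div₀ zero_le_one hx (div_pos hδ pi_pos) (div_pi_le_sin_half hδ.le ht)
    _ = π / δ := one_div_div δ π

lemma continuousOn_dirKerCirc (L : ℕ) : ContinuousOn (dirKerCirc L) (Set.Ioo 0 (2 * π)) := by
  unfold dirKerCirc
  exact ContinuousOn.div (by fun_prop) (by fun_prop) fun t ht => (sin_half_pos ht).ne'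

lemma abs_dirKerCirc_le (hδ : 0 < δ) (L : ℕ) (ht : t ∈ Set.Icc δ (2 * π - δ)) :
    |dirKerCirc L t| ≤ π / δ :=
  abs_div_sin_half_le hδ ht (abs_sin_le_one _)

lemma hasDerivAt_inv_sin_half (ht : sin (t / 2) ≠ 0) :
    HasDerivAt (fun v => (sin (v / 2))⁻¹) (-(cos (t / 2) / (2 * sin (t / 2) ^ 2))) t := by
  refine (((hasDerivAt_id t).div_const 2).sin.inv ht).congr_deriv ?_
  simp only [id_eq]
  field_simp

lemma hasDerivAt_neg_cos_div_sin_half (ht : sin (t / 2) ≠ 0) :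
    HasDerivAt (fun v => -(cos (v / 2) / sin (v / 2))) (1 / (2 * sin (t / 2) ^ 2)) t := by
  have hhalf := (hasDerivAt_id t).div_const 2
  refine (hhalf.cos.div hhalf.sin ht).neg.congr_deriv ?_
  have := sin_sq_add_cos_sq (t / 2)
  simp only [id_eq]
  field_simp
  linarith

lemma sin_half_ne_zero (hδ : 0 < δ) (ht : t ∈ Set.Icc δ (2 * π - δ)) {v : ℝ}
    (hv : v ∈ Set.uIcc δ t) : sin (v / 2) ≠ 0 := by
  rw [Set.uIcc_of_le ht.1] at hv
  exact (sin_half_pos (Icc_subset_Ioo_zero_two_pi hδ ⟨hv.1, hv.2.trans ht.2⟩)).ne'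

lemma intervalIntegrable_deriv_inv_sin_half (hδ : 0 < δ) (ht : t ∈ Set.Icc δ (2 * π - δ)) :
    IntervalIntegrable (fun v => -(cos (v / 2) / (2 * sin (v / 2) ^ 2))) volume δ t :=
  (ContinuousOn.div (by fun_prop) (by fun_prop) fun v hv =>
    mul_ne_zero two_ne_zero (pow_ne_zero 2 (sin_half_ne_zero hδ ht hv))).neg.intervalIntegrable

lemma integral_abs_deriv_inv_sin_half_le (hδ : 0 < δ) (ht : t ∈ Set.Icc δ (2 * π - δ)) :
    ∫ v in δ..t, |-(cos (v / 2) / (2 * sin (v / 2) ^ 2))| ≤ 2 * (π / δ) := by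
  have hδmem : δ ∈ Set.Icc δ (2 * π - δ) := Set.left_mem_Icc.2 (ht.1.trans ht.2)
  have hint : IntervalIntegrable (fun v => 1 / (2 * sin (v / 2) ^ 2)) volume δ t :=
    (ContinuousOn.div (by fun_prop) (by fun_prop) fun v hv =>
      mul_ne_zero two_ne_zero (pow_ne_zero 2 (sin_half_ne_zero hδ ht hv))).intervalIntegrable
  calc ∫ v in δ..t, |-(cos (v / 2) / (2 * sin (v / 2) ^ 2))|
      ≤ ∫ v in δ..t, 1 / (2 * sin (v / 2) ^ 2) := by
        refine intervalIntegral.integral_mono_on ht.1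
          (intervalIntegrable_deriv_inv_sin_half hδ ht).abs hint fun v _ => ?_
        rw [abs_neg, abs_div, abs_of_nonneg (by positivity : 0 ≤ 2 * sin (v / 2) ^ 2)]
        gcongr
        exact abs_cos_le_one _
    _ = cos (δ / 2) / sin (δ / 2) - cos (t / 2) / sin (t / 2) := by
        rw [intervalIntegral.integral_eq_sub_of_hasDerivAt
          (fun v hv => hasDerivAt_neg_cos_div_sin_half (sin_half_ne_zero hδ ht hv)) hint]
        ring
    _ ≤ |cos (δ / 2) / sin (δ / 2)| + |cos (t / 2) / sin (t / 2)| :=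
        (le_abs_self _).trans (abs_sub _ _)
    _ ≤ π / δ + π / δ := add_le_add (abs_div_sin_half_le hδ hδmem (abs_cos_le_one _))
        (abs_div_sin_half_le hδ ht (abs_cos_le_one _))
    _ = 2 * (π / δ) := by ring

lemma abs_integral_dirKerCirc_le (hδ : 0 < δ) (L : ℕ) (ht : t ∈ Set.Icc δ (2 * π - δ)) :
    |∫ v in δ..t, dirKerCirc L v| ≤ 4 * (π / δ) / (L + 1 / 2) := by
  have hinv {v : ℝ} (hv : v ∈ Set.Icc δ (2 * π - δ)) : |(sin (v / 2))⁻¹| ≤ π / δ := by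
    rw [← one_div]
    exact abs_div_sin_half_le hδ hv (abs_one (α := ℝ)).le
  calc |∫ v in δ..t, dirKerCirc L v|
      ≤ (|(sin (δ / 2))⁻¹| + |(sin (t / 2))⁻¹| +
          ∫ v in δ..t, |-(cos (v / 2) / (2 * sin (v / 2) ^ 2))|) / (L + 1 / 2) := by
        simp only [dirKerCirc, div_eq_mul_inv (sin _) (sin _)]
        exact abs_integral_sin_mul_le (by positivity) ht.1
          (fun v hv => hasDerivAt_inv_sin_half (sin_half_ne_zero hδ ht hv))
          (intervalIntegrable_deriv_inv_sin_half hδ ht)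
    _ ≤ (π / δ + π / δ + 2 * (π / δ)) / (L + 1 / 2) := by
        gcongr
        · exact hinv (Set.left_mem_Icc.2 (ht.1.trans ht.2))
        · exact hinv ht
        · exact integral_abs_deriv_inv_sin_half_le hδ ht
    _ = 4 * (π / δ) / (L + 1 / 2) := by ring

lemma dirKerCirc_periodic (L : ℕ) : Function.Periodic (dirKerCirc L) (2 * π) := by
  intro x
  have hnum : ((L : ℝ) + 1 / 2) * (x + 2 * π) = (L + 1 / 2) * x + π + L * (2 * π) := by ring
  have hden : (x + 2 * π) / 2 = x / 2 + π := by ring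
  rw [dirKerCirc, hnum, hden, sin_add_nat_mul_two_pi, sin_add_pi, sin_add_pi, neg_div_neg_eq,
    dirKerCirc]

lemma dirKerCirc_neg (L : ℕ) (x : ℝ) : dirKerCirc L (-x) = dirKerCirc L x := by
  rw [dirKerCirc, mul_neg, neg_div, sin_neg, sin_neg, neg_div_neg_eq, dirKerCirc]

end Kernel

section LocalConvolution

lemma Icc_sdiff_Unbhd_ae_eq (θ δ : ℝ) :
    (Set.Icc (-π) π \ Unbhd θ δ : Set ℝ) =ᵐ[volume]
      (Set.Ioc (-π) π ∩ {φ | cos (φ - θ) ≤ cos δ} : Set ℝ) := by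
  have hIoc : Set.Ioc (-π) π ∩ {φ | cos (φ - θ) ≤ cos δ} = Set.Ioc (-π) π \ Unbhd θ δ := by
    ext φ
    simp only [Unbhd, Set.mem_inter_iff, Set.mem_sdiff, Set.mem_ofPred_eq, not_and,
      not_lt, gt_iff_lt]
    tauto
  rw [hIoc]
  exact Ioc_ae_eq_Icc.symm.diff (Filter.EventuallyEq.refl _ _)

variable {δ : ℝ}

lemma Ioc_inter_cos_le_cos (hδ : 0 < δ) (hδπ : δ ≤ π) (θ : ℝ) :
    Set.Ioc θ (θ + 2 * π) ∩ {φ | cos (φ - θ) ≤ cos δ} = Set.Icc (θ + δ) (θ + (2 * π - δ)) := by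
  have hδmem : δ ∈ Set.Icc 0 π := ⟨hδ.le, hδπ⟩
  ext φ
  simp only [Set.mem_inter_iff, Set.mem_ofPred_eq, Set.mem_Icc, Set.mem_Ioc]
  constructor
  · rintro ⟨⟨hlow, hup⟩, hcos⟩
    rcases le_total (φ - θ) π with hφ | hφ
    · rw [strictAntiOn_cos.le_iff_ge ⟨by linarith, hφ⟩ hδmem] at hcos
      constructor <;> linarith
    · rw [← cos_two_pi_sub, strictAntiOn_cos.le_iff_ge ⟨by linarith, by linarith⟩ hδmem] at hcos
      constructor <;> linarith
  · rintro ⟨hlow, hup⟩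
    refine ⟨⟨by linarith, by linarith⟩, ?_⟩
    rcases le_total (φ - θ) π with hφ | hφ
    · exact strictAntiOn_cos.antitoneOn hδmem ⟨by linarith, hφ⟩ (by linarith)
    · rw [← cos_two_pi_sub]
      exact strictAntiOn_cos.antitoneOn hδmem ⟨by linarith, by linarith⟩ (by linarith)

lemma localConvCirc_eq {f : ℝ → ℝ} (hper : Function.Periodic f (2 * π)) (hδ : 0 < δ)
    (hδπ : δ ≤ π) (L : ℕ) (θ : ℝ) :
    localConvCirc δ L f θ =
      1 / (2 * π) * ∫ φ in (θ + δ)..(θ + (2 * π - δ)), dirKerCirc L (φ - θ) * f φ := by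
  set S : Set ℝ := {φ | cos (φ - θ) ≤ cos δ} with hS
  set k : ℝ → ℝ := fun φ => dirKerCirc L (φ - θ) * f φ with hk
  have hSm : MeasurableSet S := measurableSet_le (by fun_prop) (by fun_prop)
  have hkper : Function.Periodic (S.indicator k) (2 * π) := fun φ => by
    simp only [Set.indicator_apply, hS, hk, Set.mem_ofPred_eq, add_sub_right_comm, cos_add_two_pi,
      dirKerCirc_periodic L _, hper φ]
  have heven (φ : ℝ) : dirKerCirc L (θ - φ) * f φ = k φ := by
    rw [← neg_sub φ θ, dirKerCirc_neg]
  rw [localConvCirc]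
  congr 1
  calc ∫ φ in Set.Icc (-π) π \ Unbhd θ δ, dirKerCirc L (θ - φ) * f φ
      = ∫ φ in Set.Ioc (-π) π ∩ S, k φ := by
        simp only [heven, setIntegral_congr_set (Icc_sdiff_Unbhd_ae_eq θ δ), hS]
    _ = ∫ φ in (-π)..(-π + 2 * π), S.indicator k φ := by
        rw [intervalIntegral.integral_of_le (by linarith [pi_pos]), setIntegral_indicator hSm]
        ring_nf
    _ = ∫ φ in θ..(θ + 2 * π), S.indicator k φ := hkper.intervalIntegral_add_eq _ _
    _ = ∫ φ in (θ + δ)..(θ + (2 * π - δ)), k φ := by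
        rw [intervalIntegral.integral_of_le (by linarith [pi_pos]), setIntegral_indicator hSm, hS,
          Ioc_inter_cos_le_cos hδ hδπ, intervalIntegral.integral_of_le (by linarith),
          integral_Icc_eq_integral_Ioc]

lemma integral_abs_comp_add_sub_le_modContCirc {f : ℝ → ℝ}
    (hf : ∀ a b, IntervalIntegrable f volume a b) (hper : Function.Periodic f (2 * π)) {u η : ℝ}
    (hu : |u| ≤ η) : ∫ z in (-π)..π, |f (z + u) - f z| ≤ modContCirc f η := by
  refine le_ciSup (f := fun φ : {φ : ℝ // |φ| ≤ η} => ∫ z in (-π)..π, |f (z + φ.1) - f z|)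
    ⟨2 * ∫ z in (-π)..π, |f z|, ?_⟩ ⟨u, hu⟩
  rintro _ ⟨⟨v, _⟩, rfl⟩
  have hπ : -π + 2 * π = π := by ring
  have := integral_norm_comp_add_sub_le_two_mul hf hper two_pi_pos.le (-π) v
  rwa [hπ] at this

lemma abs_integral_dirKerCirc_sub_mul_le {f : ℝ → ℝ}
    (hf : ∀ a b, IntervalIntegrable f volume a b) (hper : Function.Periodic f (2 * π))
    (hδ : 0 < δ) (hδπ : δ ≤ π) {L : ℕ} (hL : 1 ≤ L) (θ : ℝ) :
    |∫ φ in (θ + δ)..(θ + (2 * π - δ)), dirKerCirc L (φ - θ) * f φ| ≤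
      π / δ * modContCirc f (1 / L) + 4 * (π / δ) / L *
        ((2 * π)⁻¹ * |∫ φ in (-π)..π, f φ| + 2 * (L * modContCirc f (1 / L))) := by
  have hL0 : (0 : ℝ) < L := by exact_mod_cast hL
  have hshift : ∀ φ ∈ Set.Icc (θ + δ) (θ + (2 * π - δ)), φ - θ ∈ Set.Icc δ (2 * π - δ) :=
    fun φ hφ => ⟨by linarith [hφ.1], by linarith [hφ.2]⟩
  have hker : IntervalIntegrable (fun φ => dirKerCirc L (φ - θ)) volume
      (θ + δ) (θ + (2 * π - δ)) := by
    refine ContinuousOn.intervalIntegrable_of_Icc (by linarith) ?_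
    exact (continuousOn_dirKerCirc L).comp (by fun_prop) fun φ hφ =>
      Icc_subset_Ioo_zero_two_pi hδ (hshift φ hφ)
  have hprim : ∀ φ ∈ Set.Icc (θ + δ) (θ + (2 * π - δ)),
      |∫ v in (θ + δ)..φ, dirKerCirc L (v - θ)| ≤ 4 * (π / δ) / L := by
    intro φ hφ
    rw [intervalIntegral.integral_comp_sub_right (dirKerCirc L), add_sub_cancel_left]
    refine (abs_integral_dirKerCirc_le hδ L (hshift φ hφ)).trans ?_
    gcongr
    linarith
  have hπ : -π + 2 * π = π := by ring
  have hmod : ∀ u ∈ Set.Icc 0 (1 / (L : ℝ)),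
      ∫ z in (-π)..(-π + 2 * π), ‖f (z + u) - f z‖ ≤ modContCirc f (1 / L) := by
    intro u hu
    rw [hπ]
    exact integral_abs_comp_add_sub_le_modContCirc hf hper ((abs_of_nonneg hu.1).trans_le hu.2)
  have := norm_integral_smul_le_of_periodic hf hper two_pi_pos (one_div_pos.2 hL0)
    (by linarith) (by linarith) hker (fun φ hφ => abs_dirKerCirc_le hδ L (hshift φ hφ)) hprim hmod
  simpa only [smul_eq_mul, norm_eq_abs, hπ, one_div, inv_inv] using this

theorem circle_local_convolution_upper_bound_general {f : ℝ → ℝ}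
    (hper : Function.Periodic f (2 * π)) (hf : IntegrableOn f (Set.Ioc (-π) π)) (hδ : 0 < δ)
    (hδπ : δ ≤ π) {L : ℕ} (hL : 1 ≤ L) (θ : ℝ) :
    |localConvCirc δ L f θ| ≤
      9 / 2 / δ * (|(1 / π) * ∫ φ in (-π)..π, f φ| / L + modContCirc f (1 / L)) := by
  have : (L : ℝ) ≠ 0 := Nat.cast_ne_zero.2 (Nat.one_le_iff_ne_zero.1 hL)
  have hint : ∀ a b, IntervalIntegrable f volume a b := by
    refine hper.intervalIntegrable two_pi_pos.ne' (t := -π) ?_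
    rwa [intervalIntegrable_iff_integrableOn_Ioc_of_le (by linarith [pi_pos]),
      show -π + 2 * π = π by ring]
  rw [localConvCirc_eq hper hδ hδπ, abs_mul, abs_mul, abs_of_pos (one_div_pos.2 two_pi_pos),
    abs_of_pos (one_div_pos.2 pi_pos)]
  set ω := modContCirc f (1 / L)
  set A := |∫ φ in (-π)..π, f φ|
  calc 1 / (2 * π) * |∫ φ in (θ + δ)..(θ + (2 * π - δ)), dirKerCirc L (φ - θ) * f φ|
      ≤ 1 / (2 * π) *
          (π / δ * ω + 4 * (π / δ) / L * ((2 * π)⁻¹ * A + 2 * (L * ω))) := by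
        gcongr
        exact abs_integral_dirKerCirc_sub_mul_le hint hper hδ hδπ hL θ
    _ = 1 / δ * (1 / π * A / L + 9 / 2 * ω) := by
        field_simp
        ring
    _ ≤ 1 / δ * (9 / 2 * (1 / π * A / L) + 9 / 2 * ω) := by
        gcongr
        exact le_mul_of_one_le_left (by positivity) (by norm_num)
    _ = 9 / 2 / δ * (1 / π * A / L + ω) := by ring

end LocalConvolution

/-- Telyakovskiĭ's estimate (Lemma 1.1): for `f ∈ L₁(S¹)`, `0 < δ < π`,
`|V_L^δ(f;θ)| ≤ (c/δ)(|a₀|/L + ω(f,1/L)_{L₁})` for all `θ ∈ (−π,π]`,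
with an absolute constant `c`. -/
theorem circle_local_convolution_upper_bound :
    ∃ c : ℝ, 0 < c ∧
      ∀ f : ℝ → ℝ, Function.Periodic f (2 * Real.pi) →
        IntegrableOn f (Set.Ioc (-Real.pi) Real.pi) →
        ∀ δ : ℝ, 0 < δ → δ < Real.pi →
          ∀ L : ℕ, 1 ≤ L →
            ∀ θ ∈ Set.Ioc (-Real.pi) Real.pi,
              |localConvCirc δ L f θ| ≤
                c / δ *
                  (|(1 / Real.pi) * ∫ φ in (-Real.pi)..Real.pi, f φ| / L +
                    modContCirc f (1 / L)) := by
  exact ⟨9 / 2, by norm_num, fun f hper hf δ hδ hδπ L hL θ _ =>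
    circle_local_convolution_upper_bound_general hper hf hδ hδπ.le hL θ⟩
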